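/- arXiv:2102.01002 — 8 statements merged into one kernel-verified Lean document; each statement's English description precedes it below -/
import Mathlib

section
/- Let X ⊆ ℝⁿ be a nonempty convex compact set, F : X → ℝⁿ be continuous and monotone on X, and let T ⊆ ℝ × ℝⁿ × ℝⁿ be a set such that (i) T ⊆ 𝓕[F,X], and (ii') T contains every triple (t, F(x), x) with x ∈ X and t > ⟨F(x),x⟩. Then for every ε > 0: (a) there exists (t,g,x) ∈ T with sup_{y∈X} (t − ⟨g,y⟩) ≤ ε; and (b) for every (t,g,x) ∈ T with sup_{y∈X} (t − ⟨g,y⟩) ≤ ε, one has x ∈ X and sup_{y∈X} ⟨F(y), x − y⟩ ≤ ε. If instead of (ii') the stronger condition holds that (⟨F(x),x⟩, F(x), x) ∈ T for all x ∈ X, then the same conclusions hold for every ε ≥ 0. -/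
open scoped RealInnerProductSpace

/-- `calF F X` is the set `𝓕[F,X]` of the paper. -/
def calF {n : ℕ} (F : EuclideanSpace ℝ (Fin n) → EuclideanSpace ℝ (Fin n))
    (X : Set (EuclideanSpace ℝ (Fin n))) :
    Set (ℝ × EuclideanSpace ℝ (Fin n) × EuclideanSpace ℝ (Fin n)) :=
  {p | p.2.2 ∈ X ∧ ∀ y ∈ X, ⟪F y, p.2.2 - y⟫ ≤ p.1 - ⟪p.2.1, y⟫}

/-! The heart of the matter is the existence of a solution `x ∈ X` of the variational inequality
`⟪F x, x - y⟫ ≤ 0`, `y ∈ X`. Given finitely many points `yᵢ ∈ X`, apply the minimax theorem to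
`(x, w) ↦ ∑ i, wᵢ ⟪F yᵢ, x - yᵢ⟫` on `X` times the simplex: by monotonicity the response
`x = ∑ j, wⱼ yⱼ` to the weights `w` makes the payoff nonpositive, so some `x ∈ X` satisfies
`⟪F yᵢ, x - yᵢ⟫ ≤ 0` for all `i`. Compactness gives one `x` with `⟪F y, x - y⟫ ≤ 0` for all `y ∈ X`,
and letting `y` tend to `x` along segments turns `F y` into `F x` (Minty's lemma). -/

theorem sum_mul_apply_sum_smul_sub_nonpos {𝕜 E ι : Type*} [CommRing 𝕜] [LinearOrder 𝕜]
    [IsStrictOrderedRing 𝕜] [AddCommGroup E] [Module 𝕜 E] [Fintype ι]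
    {φ : ι → Module.Dual 𝕜 E} {y : ι → E} {w : ι → 𝕜} (hw : w ∈ stdSimplex 𝕜 ι)
    (hmono : ∀ i j, 0 ≤ (φ i - φ j) (y i - y j)) :
    ∑ i, w i * φ i (∑ j, w j • y j - y i) ≤ 0 := by
  have hexpand : ∑ i, w i * φ i (∑ j, w j • y j - y i) =
      ∑ i, ∑ j, w i * w j * φ i (y j - y i) := by
    refine Finset.sum_congr rfl fun i _ ↦ ?_
    have hcenter : ∑ j, w j • y j - y i = ∑ j, w j • (y j - y i) := by
      simp only [smul_sub, Finset.sum_sub_distrib, ← Finset.sum_smul, hw.2, one_smul]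
    simp only [hcenter, map_sum, map_smul, smul_eq_mul, Finset.mul_sum, mul_assoc]
  have hsymm : ∑ i, ∑ j, w i * w j * φ i (y j - y i) +
      ∑ i, ∑ j, w i * w j * φ i (y j - y i) =
        -∑ i, ∑ j, w i * w j * (φ i - φ j) (y i - y j) := by
    conv_lhs => enter [2]; rw [Finset.sum_comm]
    simp only [← Finset.sum_add_distrib, ← Finset.sum_neg_distrib, LinearMap.sub_apply, map_sub]
    refine Finset.sum_congr rfl fun i _ ↦ Finset.sum_congr rfl fun j _ ↦ ?_
    ring
  have hnonneg : 0 ≤ ∑ i, ∑ j, w i * w j * (φ i - φ j) (y i - y j) :=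
    Finset.sum_nonneg fun i _ ↦ Finset.sum_nonneg fun j _ ↦
      mul_nonneg (mul_nonneg (hw.1 i) (hw.1 j)) (hmono i j)
  linarith

section Minty

variable {E : Type*} [AddCommGroup E] [Module ℝ E]

/-- Hemicontinuity of an operator `F` from `E` to its dual, relative to `X`: along every segment of
`X`, the values of `F` converge pointwise to the value at the starting point. This is the
continuity of `F` used in Minty's lemma. -/
def HemicontinuousOn (F : E → Module.Dual ℝ E) (X : Set E) : Prop :=
  ∀ x ∈ X, ∀ y ∈ X, ∀ v, ContinuousWithinAt (fun t : ℝ ↦ F (AffineMap.lineMap x y t) v)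
    (Set.Icc 0 1) 0

theorem HemicontinuousOn.apply_sub_nonpos {F : E → Module.Dual ℝ E} {X : Set E}
    (hF : HemicontinuousOn F X) (hconv : Convex ℝ X) {x : E} (hx : x ∈ X)
    (hminty : ∀ y ∈ X, F y (x - y) ≤ 0) {y : E} (hy : y ∈ X) : F x (x - y) ≤ 0 := by
  have hlim : Filter.Tendsto (fun t : ℝ ↦ F (AffineMap.lineMap x y t) (x - y))
      (nhdsWithin 0 (Set.Ioc 0 1)) (nhds (F x (x - y))) := by
    simpa only [AffineMap.lineMap_apply_zero] using
      ((hF x hx y hy (x - y)).mono Set.Ioc_subset_Icc_self).tendsto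
  rw [nhdsWithin_Ioc_eq_nhdsGT zero_lt_one] at hlim
  refine le_of_tendsto hlim ?_
  filter_upwards [Ioc_mem_nhdsGT zero_lt_one] with t ht
  have hsub : x - AffineMap.lineMap x y t = t • (x - y) := by
    rw [AffineMap.lineMap_apply_module']
    module
  have hle := hminty _ (hconv.lineMap_mem hx hy (Set.Ioc_subset_Icc_self ht))
  rw [hsub, map_smul, smul_eq_mul] at hle
  exact nonpos_of_mul_nonpos_right hle ht.1

variable [TopologicalSpace E] [IsTopologicalAddGroup E] [ContinuousSMul ℝ E] {X : Set E}

theorem exists_mem_forall_nonpos_of_forall_stdSimplex (hne : X.Nonempty) (hconv : Convex ℝ X)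
    (hcomp : IsCompact X) {ι : Type*} [Fintype ι] {f : ι → E → ℝ}
    (hf : ∀ i, ConvexOn ℝ X (f i)) (hlsc : ∀ i, LowerSemicontinuousOn (f i) X)
    (hresponse : ∀ w ∈ stdSimplex ℝ ι, ∃ x ∈ X, ∑ i, w i * f i x ≤ 0) :
    ∃ x ∈ X, ∀ i, f i x ≤ 0 := by
  classical
  rcases isEmpty_or_nonempty ι with _ | ⟨⟨i₀⟩⟩
  · exact hne.imp fun x hx ↦ ⟨hx, isEmptyElim⟩
  let payoff (x : E) (w : ι → ℝ) : ℝ := ∑ i, w i * f i x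
  have hlsc_payoff (w) (hw : w ∈ stdSimplex ℝ ι) : LowerSemicontinuousOn (payoff · w) X :=
    lowerSemicontinuousOn_sum fun i _ ↦ (continuous_const_mul (w i)).comp_lowerSemicontinuousOn
      (hlsc i) (monotone_mul_left_of_nonneg (hw.1 i))
  have hconvex (w) (hw : w ∈ stdSimplex ℝ ι) : ConvexOn ℝ X (payoff · w) := by
    have hsum : ConvexOn ℝ X (∑ i, fun x ↦ w i • f i x) :=
      Finset.sum_induction _ (ConvexOn ℝ X) (fun _ _ ↦ ConvexOn.add) (convexOn_const 0 hconv)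
        fun i _ ↦ (hf i).smul (hw.1 i)
    simpa only [Finset.sum_fn, smul_eq_mul] using hsum
  have hconcave (x : E) : ConcaveOn ℝ (stdSimplex ℝ ι) (payoff x) :=
    (Fintype.linearCombination ℝ (f · x)).concaveOn (convex_stdSimplex ℝ ι)
  have hcont (x : E) : Continuous (payoff x) := by fun_prop
  obtain ⟨x, hx, w, hw, hsaddle⟩ := Sion.exists_isSaddlePointOn hne hconv hcomp
    hlsc_payoff (fun w hw ↦ (hconvex w hw).quasiconvexOn) (convex_stdSimplex ℝ ι)
    ⟨_, single_mem_stdSimplex ℝ i₀⟩ (isCompact_stdSimplex ℝ ι)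
    (fun x _ ↦ (hcont x).upperSemicontinuous.upperSemicontinuousOn _)
    (fun x _ ↦ (hconcave x).quasiconcaveOn)
  obtain ⟨z, hz, hzw⟩ := hresponse w hw
  refine ⟨x, hx, fun i ↦ ?_⟩
  calc f i x = payoff x (Pi.single i 1) := by simp [payoff, Pi.single_apply]
    _ ≤ payoff z w := hsaddle z hz _ (single_mem_stdSimplex ℝ i)
    _ ≤ 0 := hzw

theorem exists_mem_forall_apply_sub_nonpos_of_finite (hne : X.Nonempty) (hconv : Convex ℝ X)
    (hcomp : IsCompact X) {ι : Type*} [Finite ι] {φ : ι → Module.Dual ℝ E}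
    (hφ : ∀ i, Continuous (φ i)) {y : ι → E} (hy : ∀ i, y i ∈ X)
    (hmono : ∀ i j, 0 ≤ (φ i - φ j) (y i - y j)) :
    ∃ x ∈ X, ∀ i, φ i (x - y i) ≤ 0 := by
  cases nonempty_fintype ι
  refine exists_mem_forall_nonpos_of_forall_stdSimplex hne hconv hcomp
    (f := fun i x ↦ φ i (x - y i)) (fun i ↦ ?_) (fun i ↦ ?_) fun w hw ↦ ?_
  · exact (((φ i).convexOn hconv).add_const (-φ i (y i))).congr fun x _ ↦ by
      simp only [Pi.add_apply, ← sub_eq_add_neg, map_sub]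
  · exact ((hφ i).comp (continuous_sub_right (y i))).lowerSemicontinuous.lowerSemicontinuousOn X
  · exact ⟨∑ j, w j • y j, hconv.sum_mem (fun i _ ↦ hw.1 i) hw.2 fun i _ ↦ hy i,
      sum_mul_apply_sum_smul_sub_nonpos hw hmono⟩

theorem exists_mem_forall_apply_sub_nonpos (hne : X.Nonempty) (hconv : Convex ℝ X)
    (hcomp : IsCompact X) {ι : Type*} {φ : ι → Module.Dual ℝ E}
    (hφ : ∀ i, Continuous (φ i)) {y : ι → E} (hy : ∀ i, y i ∈ X)
    (hmono : ∀ i j, 0 ≤ (φ i - φ j) (y i - y j)) :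
    ∃ x ∈ X, ∀ i, φ i (x - y i) ≤ 0 := by
  have hclosed (i : ι) : IsClosed {x | φ i (x - y i) ≤ 0} :=
    isClosed_le ((hφ i).comp (continuous_sub_right (y i))) continuous_const
  obtain ⟨x, hx, hxφ⟩ := hcomp.inter_iInter_nonempty _ hclosed fun u ↦ by
    obtain ⟨x, hx, hxφ⟩ := exists_mem_forall_apply_sub_nonpos_of_finite hne hconv hcomp
      (fun i : u ↦ hφ i) (fun i ↦ hy i) fun i j ↦ hmono i j
    exact ⟨x, hx, Set.mem_iInter₂.2 fun i hi ↦ hxφ ⟨i, hi⟩⟩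
  exact ⟨x, hx, fun i ↦ Set.mem_iInter.1 hxφ i⟩

theorem exists_mem_forall_mem_apply_self_sub_nonpos (hne : X.Nonempty) (hconv : Convex ℝ X)
    (hcomp : IsCompact X) {F : E → Module.Dual ℝ E} (hdual : ∀ x ∈ X, Continuous (F x))
    (hF : HemicontinuousOn F X) (hmono : ∀ x ∈ X, ∀ y ∈ X, 0 ≤ (F x - F y) (x - y)) :
    ∃ x ∈ X, ∀ y ∈ X, F x (x - y) ≤ 0 := by
  obtain ⟨x, hx, hminty⟩ := exists_mem_forall_apply_sub_nonpos hne hconv hcomp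
    (fun y : X ↦ hdual y y.2) (fun y ↦ y.2) fun x y ↦ hmono x x.2 y y.2
  exact ⟨x, hx, fun y hy ↦ hF.apply_sub_nonpos hconv hx (fun z hz ↦ hminty ⟨z, hz⟩) hy⟩

end Minty

theorem hemicontinuousOn_innerₗ_of_continuousOn {E : Type*} [NormedAddCommGroup E]
    [InnerProductSpace ℝ E] {X : Set E} (hconv : Convex ℝ X) {F : E → E}
    (hF : ContinuousOn F X) :
    HemicontinuousOn (fun x ↦ innerₗ E (F x)) X := by
  intro x hx y hy v
  have hcomp : ContinuousOn (fun t : ℝ ↦ F (AffineMap.lineMap x y t)) (Set.Icc 0 1) :=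
    hF.comp AffineMap.lineMap_continuous.continuousOn (hconv.mapsTo_lineMap hx hy)
  exact (hcomp.inner continuousOn_const) 0 (Set.left_mem_Icc.2 zero_le_one)

section GapCertificates

variable {E G : Type*} [AddCommGroup E] [Module ℝ E] [AddCommGroup G] [Module ℝ G]
  {B : G →ₗ[ℝ] E →ₗ[ℝ] ℝ} {F : E → G} {X : Set E}

/-- The set `𝓕[F,X]` for an operator `F` with values in a space `G` paired with `E` by `B`; the
inner product is replaced by `B`. A triple `(t, g, x)` in it certifies that the affine function
`t - B g y` dominates `B (F y) (x - y)` on `X`. -/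
def gapCertificates (B : G →ₗ[ℝ] E →ₗ[ℝ] ℝ) (F : E → G) (X : Set E) : Set (ℝ × G × E) :=
  {p | p.2.2 ∈ X ∧ ∀ y ∈ X, B (F y) (p.2.2 - y) ≤ p.1 - B p.2.1 y}

theorem mem_and_gap_le_of_mem_gapCertificates {p : ℝ × G × E}
    (hp : p ∈ gapCertificates B F X) {ε : ℝ} (hε : ∀ y ∈ X, p.1 - B p.2.1 y ≤ ε) :
    p.2.2 ∈ X ∧ ∀ y ∈ X, B (F y) (p.2.2 - y) ≤ ε :=
  ⟨hp.1, fun y hy ↦ (hp.2 y hy).trans (hε y hy)⟩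

theorem stmt_3_general [TopologicalSpace E] [IsTopologicalAddGroup E] [ContinuousSMul ℝ E]
    (hne : X.Nonempty) (hconv : Convex ℝ X) (hcomp : IsCompact X)
    (hB : ∀ x ∈ X, Continuous (B (F x))) (hF : HemicontinuousOn (fun x ↦ B (F x)) X)
    (hmono : ∀ x ∈ X, ∀ y ∈ X, 0 ≤ B (F x - F y) (x - y))
    {T : Set (ℝ × G × E)} (hTi : T ⊆ gapCertificates B F X)
    (hTii' : ∀ x ∈ X, ∀ t : ℝ, B (F x) x < t → (t, F x, x) ∈ T) :
    (∀ ε : ℝ, 0 < ε →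
      (∃ p ∈ T, ∀ y ∈ X, p.1 - B p.2.1 y ≤ ε) ∧
      (∀ p ∈ T, (∀ y ∈ X, p.1 - B p.2.1 y ≤ ε) →
        p.2.2 ∈ X ∧ ∀ y ∈ X, B (F y) (p.2.2 - y) ≤ ε)) ∧
    ((∀ x ∈ X, (B (F x) x, F x, x) ∈ T) →
      ∀ ε : ℝ, 0 ≤ ε →
      (∃ p ∈ T, ∀ y ∈ X, p.1 - B p.2.1 y ≤ ε) ∧
      (∀ p ∈ T, (∀ y ∈ X, p.1 - B p.2.1 y ≤ ε) →
        p.2.2 ∈ X ∧ ∀ y ∈ X, B (F y) (p.2.2 - y) ≤ ε)) := by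
  obtain ⟨x, hx, hsol⟩ := exists_mem_forall_mem_apply_self_sub_nonpos hne hconv hcomp
    hB hF (by simpa only [map_sub] using hmono)
  simp only [map_sub, sub_nonpos] at hsol
  refine ⟨fun ε hε ↦ ⟨⟨(B (F x) x + ε, F x, x), hTii' x hx _ (by linarith), fun y hy ↦ ?_⟩,
      fun p hp ↦ mem_and_gap_le_of_mem_gapCertificates (hTi hp)⟩,
    fun hT ε hε ↦ ⟨⟨_, hT x hx, fun y hy ↦ ?_⟩,
      fun p hp ↦ mem_and_gap_le_of_mem_gapCertificates (hTi hp)⟩⟩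
  · dsimp only
    linarith [hsol y hy]
  · dsimp only
    linarith [hsol y hy]

end GapCertificates

theorem stmt_3 {n : ℕ} (X : Set (EuclideanSpace ℝ (Fin n))) (hne : X.Nonempty)
    (hconv : Convex ℝ X) (hcomp : IsCompact X)
    (F : EuclideanSpace ℝ (Fin n) → EuclideanSpace ℝ (Fin n))
    (hcont : ContinuousOn F X)
    (hmono : ∀ x ∈ X, ∀ y ∈ X, 0 ≤ ⟪F x - F y, x - y⟫)
    (T : Set (ℝ × EuclideanSpace ℝ (Fin n) × EuclideanSpace ℝ (Fin n)))
    (hTi : T ⊆ calF F X)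
    (hTii' : ∀ x ∈ X, ∀ t : ℝ, ⟪F x, x⟫ < t → (t, F x, x) ∈ T) :
    (∀ ε : ℝ, 0 < ε →
      (∃ p ∈ T, ∀ y ∈ X, p.1 - ⟪p.2.1, y⟫ ≤ ε) ∧
      (∀ p ∈ T, (∀ y ∈ X, p.1 - ⟪p.2.1, y⟫ ≤ ε) →
        p.2.2 ∈ X ∧ ∀ y ∈ X, ⟪F y, p.2.2 - y⟫ ≤ ε)) ∧
    ((∀ x ∈ X, (⟪F x, x⟫, F x, x) ∈ T) →
      ∀ ε : ℝ, 0 ≤ ε →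
      (∃ p ∈ T, ∀ y ∈ X, p.1 - ⟪p.2.1, y⟫ ≤ ε) ∧
      (∀ p ∈ T, (∀ y ∈ X, p.1 - ⟪p.2.1, y⟫ ≤ ε) →
        p.2.2 ∈ X ∧ ∀ y ∈ X, ⟪F y, p.2.2 - y⟫ ≤ ε)) :=
  stmt_3_general (B := innerₗ _) hne hconv hcomp
    (fun _ _ ↦ continuous_const.inner continuous_id)
    (hemicontinuousOn_innerₗ_of_continuousOn hconv hcont) hmono hTi hTii'
end

section
/- Let Y ⊆ ℝ^m be a nonempty convex compact set, K ⊆ ℝ^N a closed convex cone, P ∈ ℝ^{N×m}, p ∈ ℝ^N, Q ∈ ℝ^{N×k}, s ∈ ℝ^N, and let C := {(f,t,u) ∈ ℝ^m × ℝ × ℝ^k : s − (Pf + tp + Qu) ∈ K} be nonempty. Assume that inf_{(f,t,u)∈C} (fᵀy + t) > −∞ for every y ∈ Y. Then sup_{y∈Y} inf_{(f,t,u)∈C} (fᵀy + t) = inf_{(f,t,u)∈C} ( max_{y∈Y} fᵀy + t ). -/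
open Matrix

/-! The payoff `f ⬝ᵥ y + t` is continuous and affine in `y` and in `(f, t, u)` separately, and `C`,
the preimage of a convex set under an affine map, is convex. Sion's minimax theorem therefore
exchanges the two extrema. It is used in the dual order because here the compact side maximizes;
the lower bounds assumed for each `y`, and compactness on the other side, make every supremum and
infimum that occurs a genuine one rather than the junk value `0`. -/

section Sion

variable {E F β : Type*} [ConditionallyCompleteLinearOrder β] [DenselyOrdered β]
  [TopologicalSpace E] [AddCommGroup E] [Module ℝ E] [IsTopologicalAddGroup E] [ContinuousSMul ℝ E]
  [TopologicalSpace F] [AddCommGroup F] [Module ℝ F] [IsTopologicalAddGroup F] [ContinuousSMul ℝ F]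
  {X : Set E} {Y : Set F} {f : E → F → β}

theorem ciSup_ciInf_eq_ciInf_ciSup_of_quasiconcaveOn_of_quasiconvexOn
    (hXne : X.Nonempty) (hXconv : Convex ℝ X) (hXcomp : IsCompact X)
    (hYne : Y.Nonempty) (hYconv : Convex ℝ Y)
    (husc : ∀ y ∈ Y, UpperSemicontinuousOn (f · y) X)
    (hconc : ∀ y ∈ Y, QuasiconcaveOn ℝ X (f · y))
    (hlsc : ∀ x ∈ X, LowerSemicontinuousOn (f x) Y)
    (hconv : ∀ x ∈ X, QuasiconvexOn ℝ Y (f x))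
    (hbdd : ∀ x ∈ X, BddBelow (f x '' Y)) :
    ⨆ x : X, ⨅ y : Y, f x y = ⨅ y : Y, ⨆ x : X, f x y := by
  obtain ⟨x₀, hx₀⟩ := hXne
  obtain ⟨y₀, hy₀⟩ := hYne
  have : Nonempty β := ⟨f x₀ y₀⟩
  have isGLB_row : ∀ x ∈ X, IsGLB (f x '' Y) (⨅ y : Y, f x y) := fun x hx =>
    isGLB_ciInf_set (hbdd x hx) ⟨y₀, hy₀⟩
  have isLUB_col : ∀ y ∈ Y, IsLUB ((f · y) '' X) (⨆ x : X, f x y) := fun y hy =>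
    isLUB_ciSup_set ((husc y hy).bddAbove_of_isCompact hXcomp) ⟨x₀, hx₀⟩
  have row_le_col : ∀ x ∈ X, ∀ y ∈ Y, ⨅ y : Y, f x y ≤ ⨆ x : X, f x y := fun x hx y hy =>
    ((isGLB_row x hx).1 ⟨y, hy, rfl⟩).trans ((isLUB_col y hy).1 ⟨x, hx, rfl⟩)
  have isLUB_rows : IsLUB ((fun x => ⨅ y : Y, f x y) '' X) (⨆ x : X, ⨅ y : Y, f x y) :=
    isLUB_ciSup_set ⟨_, Set.forall_mem_image.2 fun x hx => row_le_col x hx y₀ hy₀⟩ ⟨x₀, hx₀⟩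
  have isGLB_cols : IsGLB ((fun y => ⨆ x : X, f x y) '' Y) (⨅ y : Y, ⨆ x : X, f x y) :=
    isGLB_ciInf_set ⟨_, Set.forall_mem_image.2 fun y hy => row_le_col x₀ hx₀ y hy⟩ ⟨y₀, hy₀⟩
  exact Sion.minimax (β := βᵒᵈ) ⟨x₀, hx₀⟩ hXcomp husc hconc hYconv hlsc hconv hXconv
    _ isGLB_row _ isLUB_rows _ isLUB_col _ isGLB_cols

end Sion

theorem convex_setOf_sub_mem {V W : Type*} [AddCommGroup V] [Module ℝ V] [AddCommGroup W]
    [Module ℝ W] {K : Set W} (hK : Convex ℝ K) (A : V →ₗ[ℝ] W) (s : W) :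
    Convex ℝ {v | s - A v ∈ K} :=
  hK.affine_preimage (AffineMap.const ℝ V s - A.toAffineMap)

theorem setOf_exists_mem_eq_image {α β : Type*} (s : Set α) (f : α → β) :
    {b | ∃ a ∈ s, b = f a} = f '' s := by
  simp only [Set.image, eq_comm]

section Payoff

variable {ι W : Type*} [Fintype ι] [AddCommGroup W] [Module ℝ W]

theorem concaveOn_dotProduct_add_const {Y : Set (ι → ℝ)} (hY : Convex ℝ Y) (a : ι → ℝ) (t : ℝ) :
    ConcaveOn ℝ Y fun y => a ⬝ᵥ y + t :=
  ((dotProductBilin ℝ ℝ a).concaveOn hY).add_const t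

theorem convexOn_fst_dotProduct_add_snd {C : Set ((ι → ℝ) × ℝ × W)} (hC : Convex ℝ C)
    (y : ι → ℝ) : ConvexOn ℝ C fun c => c.1 ⬝ᵥ y + c.2.1 :=
  ((dotProductBilin ℝ ℝ).flip y ∘ₗ .fst ℝ _ _ + .fst ℝ _ _ ∘ₗ .snd ℝ _ _).convexOn hC

theorem ciSup_dotProduct_add {Y : Set (ι → ℝ)} (hYne : Y.Nonempty) (hYcomp : IsCompact Y)
    (a : ι → ℝ) (t : ℝ) : (⨆ y : Y, a ⬝ᵥ y.1) + t = ⨆ y : Y, (a ⬝ᵥ y.1 + t) := by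
  have := hYne.to_subtype
  have hcont : Continuous (a ⬝ᵥ · : (ι → ℝ) → ℝ) := by fun_prop
  refine ciSup_add ?_ t
  rw [← Set.image_eq_range]
  exact hYcomp.bddAbove_image hcont.continuousOn

theorem stmt_6_general
    {Y : Set (ι → ℝ)} (hYne : Y.Nonempty) (hYconv : Convex ℝ Y) (hYcomp : IsCompact Y)
    {C : Set ((ι → ℝ) × ℝ × W)} (hCne : C.Nonempty) (hCconv : Convex ℝ C)
    (hbd : ∀ y ∈ Y, BddBelow ((fun c => c.1 ⬝ᵥ y + c.2.1) '' C)) :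
    ⨆ y : Y, ⨅ c : C, (c.1.1 ⬝ᵥ y.1 + c.1.2.1) =
      ⨅ c : C, ((⨆ y : Y, c.1.1 ⬝ᵥ y.1) + c.1.2.1) := by
  -- The payoff ignores the `W` component, so it is continuous even for the indiscrete topology.
  let : TopologicalSpace W := ⊤
  have : ContinuousSMul ℝ W := ⟨continuous_top⟩
  simp only [ciSup_dotProduct_add hYne hYcomp]
  exact ciSup_ciInf_eq_ciInf_ciSup_of_quasiconcaveOn_of_quasiconvexOn
    (f := fun y (c : (ι → ℝ) × ℝ × W) => c.1 ⬝ᵥ y + c.2.1)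
    hYne hYconv hYcomp hCne hCconv
    (fun c _ => ContinuousOn.upperSemicontinuousOn (by fun_prop))
    (fun c _ => (concaveOn_dotProduct_add_const hYconv c.1 c.2.1).quasiconcaveOn)
    (fun y _ => ContinuousOn.lowerSemicontinuousOn (by fun_prop))
    (fun y _ => (convexOn_fst_dotProduct_add_snd hCconv y).quasiconvexOn)
    hbd

end Payoff

theorem stmt_6 {m k N : ℕ}
    (Y : Set (Fin m → ℝ)) (hYne : Y.Nonempty) (hYconv : Convex ℝ Y)
    (hYcomp : IsCompact Y)
    (K : Set (Fin N → ℝ)) (hKclosed : IsClosed K) (hKconv : Convex ℝ K)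
    (hKcone : ∀ a : ℝ, 0 ≤ a → ∀ v ∈ K, a • v ∈ K)
    (P : Matrix (Fin N) (Fin m) ℝ) (p : Fin N → ℝ)
    (Q : Matrix (Fin N) (Fin k) ℝ) (s : Fin N → ℝ)
    (C : Set ((Fin m → ℝ) × ℝ × (Fin k → ℝ)))
    (hC : C = {c | s - (P.mulVec c.1 + c.2.1 • p + Q.mulVec c.2.2) ∈ K})
    (hCne : C.Nonempty)
    (hbd : ∀ y ∈ Y, BddBelow {v : ℝ | ∃ c ∈ C, v = c.1 ⬝ᵥ y + c.2.1}) :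
    sSup {v : ℝ | ∃ y ∈ Y, v = sInf {w : ℝ | ∃ c ∈ C, w = c.1 ⬝ᵥ y + c.2.1}} =
      sInf {w : ℝ | ∃ c ∈ C,
        w = sSup {v : ℝ | ∃ y ∈ Y, v = c.1 ⬝ᵥ y} + c.2.1} := by
  have hCconv : Convex ℝ C := by
    simpa [hC, add_assoc] using convex_setOf_sub_mem hKconv
      (P.mulVecLin.coprod ((LinearMap.toSpanSingleton ℝ _ p).coprod Q.mulVecLin)) s
  simp only [setOf_exists_mem_eq_image, sSup_image', sInf_image'] at hbd ⊢
  exact stmt_6_general hYne hYconv hYcomp hCne hCconv hbd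
end

section
/- Let A ∈ ℝ^{n×n}, a ∈ ℝⁿ, F(x) := Ax + a, and Ā := (A + Aᵀ)/2. Then: (a) F is monotone on ℝⁿ if and only if Ā is positive semidefinite. Assume Ā is positive semidefinite. Then: (b) whenever t ∈ ℝ, g ∈ ℝⁿ, x ∈ ℝⁿ satisfy t ≥ xᵀĀx + aᵀx and g = Ax + a, one has (t,g,x) ∈ 𝓕[F,ℝⁿ], i.e., t − ⟨g,y⟩ ≥ ⟨Ay + a, x − y⟩ for all y ∈ ℝⁿ; and (c) for every x ∈ ℝⁿ, the triple t = ⟨F(x), x⟩, g = F(x), x satisfies t ≥ xᵀĀx + aᵀx and g = Ax + a. -/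
open Matrix

/-!
The inequality defining membership of `(t, F x, x)` in `𝓕[F, X]` rearranges to
`⟪F x, x⟫ - t ≤ ⟪F x - F y, x - y⟫`, so it holds for every monotone `F` as soon as `⟪F x, x⟫ ≤ t`.
For `F x = A x + a` the right-hand side is the quadratic form of `A` at `x - y`. A quadratic form
only sees the symmetric part of its matrix, so monotonicity is positive semidefiniteness of `Ā`,
and `xᵀ Ā x + aᵀ x` is `⟪F x, x⟫`.
-/

variable {ι R : Type*}

section MonotoneOperator

open Set

variable [Fintype ι] [Ring R] [PartialOrder R]

/-- Monotonicity of the vector field `F` on `X` in the sense of operator theory and variational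
inequalities, with the standard pairing `⬝ᵥ` in place of the inner product; it is unrelated to the
order-theoretic `MonotoneOn`. -/
def IsMonotoneOperatorOn (F : (ι → R) → ι → R) (X : Set (ι → R)) : Prop :=
  ∀ x ∈ X, ∀ y ∈ X, 0 ≤ (F x - F y) ⬝ᵥ (x - y)

/-- The set `𝓕[F, X]` of triples `(t, g, x)`. Its slice at `t = 0`, `g = 0` consists of the weak
(Minty) solutions `x` of the variational inequality of `F` on `X`. -/
def mintySet (F : (ι → R) → ι → R) (X : Set (ι → R)) : Set (R × (ι → R) × (ι → R)) :=
  {(t, g, x) : R × (ι → R) × (ι → R) |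
    x ∈ X ∧ ∀ y ∈ X, F y ⬝ᵥ (x - y) ≤ t - g ⬝ᵥ y}

theorem IsMonotoneOperatorOn.mem_mintySet [IsOrderedAddMonoid R] {F : (ι → R) → ι → R}
    {X : Set (ι → R)} (hF : IsMonotoneOperatorOn F X) {t : R} {x : ι → R} (hx : x ∈ X)
    (ht : F x ⬝ᵥ x ≤ t) : (t, F x, x) ∈ mintySet F X := by
  refine ⟨hx, fun y hy ↦ ?_⟩
  calc
    F y ⬝ᵥ (x - y) ≤ F x ⬝ᵥ (x - y) := by
      rw [← sub_nonneg, ← sub_dotProduct]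
      exact hF x hx y hy
    _ = F x ⬝ᵥ x - F x ⬝ᵥ y := dotProduct_sub _ _ _
    _ ≤ t - F x ⬝ᵥ y := sub_le_sub_right ht _

theorem isMonotoneOperatorOn_univ_mulVec_add_iff (A : Matrix ι ι R) (a : ι → R) :
    IsMonotoneOperatorOn (fun x ↦ A *ᵥ x + a) univ ↔ ∀ x, 0 ≤ (A *ᵥ x) ⬝ᵥ x := by
  simp only [IsMonotoneOperatorOn, mem_univ, true_imp_iff, add_sub_add_right_eq_sub, ← mulVec_sub]
  exact ⟨fun h x ↦ by simpa only [sub_zero] using h x 0, fun h x y ↦ h (x - y)⟩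

end MonotoneOperator

section SymmetricPart

variable [Field R]

/-- The symmetric part `Ā = (A + Aᵀ) / 2` of a square matrix `A`. It takes the junk value `0` in
characteristic two. -/
def symmetricPart (A : Matrix ι ι R) : Matrix ι ι R :=
  (1 / 2 : R) • (A + Aᵀ)

theorem isSymm_symmetricPart (A : Matrix ι ι R) : (symmetricPart A).IsSymm :=
  (isSymm_add_transpose_self A).smul _

variable [Fintype ι] [NeZero (2 : R)]

theorem dotProduct_symmetricPart_mulVec (A : Matrix ι ι R) (x : ι → R) :
    x ⬝ᵥ symmetricPart A *ᵥ x = (A *ᵥ x) ⬝ᵥ x := by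
  rw [symmetricPart, smul_mulVec, add_mulVec, dotProduct_smul, dotProduct_add,
    dotProduct_transpose_mulVec, dotProduct_comm x, smul_eq_mul, ← two_mul,
    one_div, inv_mul_cancel_left₀ two_ne_zero]

theorem posSemidef_symmetricPart_iff [PartialOrder R] [StarRing R] [TrivialStar R]
    (A : Matrix ι ι R) : (symmetricPart A).PosSemidef ↔ ∀ x, 0 ≤ (A *ᵥ x) ⬝ᵥ x := by
  simp only [posSemidef_iff_dotProduct_mulVec, isHermitian_iff_isSymm, isSymm_symmetricPart,
    true_and, star_trivial, dotProduct_symmetricPart_mulVec]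

end SymmetricPart

theorem stmt_8_general [Fintype ι] [Field R] [PartialOrder R] [IsStrictOrderedRing R]
    [StarRing R] [TrivialStar R] (A : Matrix ι ι R) (a : ι → R) (F : (ι → R) → (ι → R))
    (hF : ∀ x, F x = A *ᵥ x + a) (Abar : Matrix ι ι R) (hAbar : Abar = (1 / 2 : R) • (A + Aᵀ)) :
    ((∀ x y, 0 ≤ (F x - F y) ⬝ᵥ (x - y)) ↔ Abar.PosSemidef) ∧
    (Abar.PosSemidef → ∀ (t : R) (g x : ι → R),
      x ⬝ᵥ Abar *ᵥ x + a ⬝ᵥ x ≤ t → g = A *ᵥ x + a →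
      ∀ y, (A *ᵥ y + a) ⬝ᵥ (x - y) ≤ t - g ⬝ᵥ y) ∧
    (∀ x, x ⬝ᵥ Abar *ᵥ x + a ⬝ᵥ x ≤ F x ⬝ᵥ x ∧ F x = A *ᵥ x + a) := by
  obtain rfl : F = fun x ↦ A *ᵥ x + a := funext hF
  obtain rfl : Abar = symmetricPart A := hAbar
  have monotone_iff : IsMonotoneOperatorOn (fun x ↦ A *ᵥ x + a) Set.univ ↔
      (symmetricPart A).PosSemidef :=
    (isMonotoneOperatorOn_univ_mulVec_add_iff A a).trans (posSemidef_symmetricPart_iff A).symm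
  have form_eq (x : ι → R) : x ⬝ᵥ symmetricPart A *ᵥ x + a ⬝ᵥ x = (A *ᵥ x + a) ⬝ᵥ x := by
    rw [dotProduct_symmetricPart_mulVec, add_dotProduct]
  refine ⟨by simpa [IsMonotoneOperatorOn] using monotone_iff, ?_, fun x ↦ ⟨(form_eq x).le, rfl⟩⟩
  rintro hpsd t _ x ht rfl y
  exact ((monotone_iff.2 hpsd).mem_mintySet (Set.mem_univ x) (form_eq x ▸ ht)).2 y (Set.mem_univ y)

theorem stmt_8 {n : ℕ} (A : Matrix (Fin n) (Fin n) ℝ) (a : Fin n → ℝ)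
    (F : (Fin n → ℝ) → (Fin n → ℝ)) (hF : ∀ x, F x = A.mulVec x + a)
    (Abar : Matrix (Fin n) (Fin n) ℝ) (hAbar : Abar = (1 / 2 : ℝ) • (A + Aᵀ)) :
    -- (a) monotonicity of F on ℝⁿ is equivalent to Ā ⪰ 0
    ((∀ x y : Fin n → ℝ, 0 ≤ (F x - F y) ⬝ᵥ (x - y)) ↔ Abar.PosSemidef) ∧
    (Abar.PosSemidef →
      -- (b) any solution of the conic constraint lies in 𝓕[F,ℝⁿ]
      ((∀ (t : ℝ) (g x : Fin n → ℝ),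
          x ⬝ᵥ Abar.mulVec x + a ⬝ᵥ x ≤ t → g = A.mulVec x + a →
          ∀ y : Fin n → ℝ, (A.mulVec y + a) ⬝ᵥ (x - y) ≤ t - g ⬝ᵥ y) ∧
       -- (c) the canonical triple solves the constraint
       (∀ x : Fin n → ℝ,
          x ⬝ᵥ Abar.mulVec x + a ⬝ᵥ x ≤ (F x) ⬝ᵥ x ∧ F x = A.mulVec x + a))) := by
  obtain ⟨monotone_iff, mem, canonical⟩ := stmt_8_general A a F hF Abar hAbar
  exact ⟨monotone_iff, fun hpsd ↦ ⟨mem hpsd, canonical⟩⟩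
end

section
/- Let U ⊆ ℝ^p and V ⊆ ℝ^q be nonempty convex compact sets and ψ : U × V → ℝ be continuously differentiable, convex in u for each fixed v ∈ V, and concave in v for each fixed u ∈ U. Let X := U × V and F(u,v) := (∇_u ψ(u,v), −∇_v ψ(u,v)). Define Z := {(t, (h,e), (u,v)) ∈ ℝ × (ℝ^p × ℝ^q) × (ℝ^p × ℝ^q) : u ∈ U, v ∈ V, and there exist r, s ∈ ℝ with r > max_{ζ∈V} (⟨ζ,e⟩ + ψ(u,ζ)), s > max_{ω∈U} (⟨ω,h⟩ − ψ(ω,v)), and t ≥ r + s}. Then: (a) Z ⊆ 𝓕[F, X]; and (b) if x = (u,v) ∈ X, g = F(x), and t > ⟨x, F(x)⟩, then (t, g, x) ∈ Z. -/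
open scoped RealInnerProductSpace

/-!
The components of `F` at `(w, ζ)` are subgradients of the convex functions `ψ (·, ζ)` at `w` and
`-ψ (w, ·)` at `ζ`. For (a), test the two subgradient inequalities at `u` and `v`, and add the
bounds defining `r` and `s` at `ζ` and `w`: all the values of `ψ` cancel. For (b), the subgradient
inequalities at `(u, v)` itself say that the two maxima are attained at `v` and `u`; their sum is
`⟨x, F x⟩ < t`, which leaves room for `r` and `s` strictly above them.
-/

section FirstOrder

/-- `g` is a subgradient at `x` of the restriction of `f` to `S`. The point `x` is not required to
lie in `S`. -/
def IsSubgradientOn {E : Type*} [NormedAddCommGroup E] [InnerProductSpace ℝ E]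
    (f : E → ℝ) (S : Set E) (x g : E) : Prop :=
  ∀ y ∈ S, f x + ⟪g, y - x⟫ ≤ f y

theorem IsSubgradientOn.inner_sub_le_inner_sub {E : Type*} [NormedAddCommGroup E]
    [InnerProductSpace ℝ E] {f : E → ℝ} {S : Set E} {x y g : E} (h : IsSubgradientOn f S x g)
    (hy : y ∈ S) : ⟪y, g⟫ - f y ≤ ⟪x, g⟫ - f x := by
  have hxy := h y hy
  rw [inner_sub_right, real_inner_comm y, real_inner_comm x] at hxy
  linarith

theorem add_apply_sub_le_of_convexOn_of_hasFDerivWithinAt {E : Type*} [NormedAddCommGroup E]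
    [NormedSpace ℝ E] {f : E → ℝ} {f' : E →L[ℝ] ℝ} {S : Set E} {x y : E} (hf : ConvexOn ℝ S f)
    (hx : x ∈ S) (hy : y ∈ S) (hf' : HasFDerivWithinAt f f' S x) :
    f x + f' (y - x) ≤ f y := by
  let γ : ℝ →ᵃ[ℝ] E := AffineMap.lineMap x y
  have hγ : HasDerivWithinAt γ (y - x) (γ ⁻¹' S) 0 :=
    AffineMap.hasDerivAt_lineMap.hasDerivWithinAt
  have hfγ : HasDerivWithinAt (f ∘ γ) (f' (y - x)) (γ ⁻¹' S) 0 :=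
    HasFDerivWithinAt.comp_hasDerivWithinAt (t := S) 0 (by simpa [γ] using hf') hγ
      (Set.mapsTo_preimage γ S)
  have hslope : f' (y - x) ≤ slope (f ∘ γ) 0 1 :=
    (hf.comp_affineMap γ).le_slope_of_hasDerivWithinAt (by simpa [γ] using hx)
      (by simpa [γ] using hy) one_pos hfγ
  have hsub : slope (f ∘ γ) 0 1 = f y - f x := by simp [slope_def_field, γ]
  linarith

variable {E : Type*} [NormedAddCommGroup E] [InnerProductSpace ℝ E] [CompleteSpace E]
  {f : E → ℝ} {S : Set E} {x g : E}

theorem isSubgradientOn_of_convexOn (hf : ConvexOn ℝ S f) (hx : x ∈ S)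
    (hg : HasGradientWithinAt f g S x) : IsSubgradientOn f S x g := fun y hy => by
  simpa using add_apply_sub_le_of_convexOn_of_hasFDerivWithinAt hf hx hy hg.hasFDerivWithinAt

theorem isSubgradientOn_neg_of_concaveOn (hf : ConcaveOn ℝ S f) (hx : x ∈ S)
    (hg : HasGradientWithinAt f g S x) : IsSubgradientOn (-f) S x (-g) :=
  isSubgradientOn_of_convexOn hf.neg hx <| by
    simpa [hasGradientWithinAt_iff_hasFDerivWithinAt] using hg.hasFDerivWithinAt.neg

end FirstOrder

section Saddle

variable {E F : Type*} [NormedAddCommGroup E] [InnerProductSpace ℝ E]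
  [NormedAddCommGroup F] [InnerProductSpace ℝ F]

/-- The set `𝓕[T, X]` of triples `(t, g, x)` attached to a vector field `T` on a set `X` of pairs.
The inner product of pairs is written out as a sum, since `E × F` carries the sup norm. -/
def variationalSet (T : E × F → E × F) (X : Set (E × F)) : Set (ℝ × (E × F) × (E × F)) :=
  {z | z.2.2 ∈ X ∧ ∀ y ∈ X,
    ⟪(T y).1, z.2.2.1 - y.1⟫ + ⟪(T y).2, z.2.2.2 - y.2⟫ ≤
      z.1 - (⟪z.2.1.1, y.1⟫ + ⟪z.2.1.2, y.2⟫)}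

/-- The set `Z` of triples `(t, (h, e), (u, v))` attached to `ψ` on `U × V`. The conditions
`r > max` and `s > max` are encoded as pointwise strict bounds, which is the same when the maxima
are attained. -/
def saddleSet (ψ : E → F → ℝ) (U : Set E) (V : Set F) : Set (ℝ × (E × F) × (E × F)) :=
  {z | z.2.2.1 ∈ U ∧ z.2.2.2 ∈ V ∧ ∃ r s : ℝ,
    (∀ ζ ∈ V, ⟪ζ, z.2.1.2⟫ + ψ z.2.2.1 ζ < r) ∧
    (∀ ω ∈ U, ⟪ω, z.2.1.1⟫ - ψ ω z.2.2.2 < s) ∧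
    r + s ≤ z.1}

/-- `T` is a selection of the saddle operator of `ψ` on `U × V`, the possibly nonsmooth version of
`(∇_u ψ, -∇_v ψ)`: its components at `(u, v)` are subgradients of `ψ (·, v)` at `u` and of
`-ψ (u, ·)` at `v`. -/
def IsSaddleOperatorOn (ψ : E → F → ℝ) (U : Set E) (V : Set F) (T : E × F → E × F) : Prop :=
  ∀ u ∈ U, ∀ v ∈ V, IsSubgradientOn (fun u' => ψ u' v) U u (T (u, v)).1 ∧
    IsSubgradientOn (fun v' => -ψ u v') V v (T (u, v)).2

variable {ψ : E → F → ℝ} {U : Set E} {V : Set F} {T : E × F → E × F}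

theorem isSaddleOperatorOn_gradient [CompleteSpace E] [CompleteSpace F]
    (hconv : ∀ v ∈ V, ConvexOn ℝ U (fun u => ψ u v))
    (hconc : ∀ u ∈ U, ConcaveOn ℝ V (fun v => ψ u v))
    (hψu : ∀ u ∈ U, ∀ v ∈ V, DifferentiableAt ℝ (fun u' => ψ u' v) u)
    (hψv : ∀ u ∈ U, ∀ v ∈ V, DifferentiableAt ℝ (fun v' => ψ u v') v) :
    IsSaddleOperatorOn ψ U V fun x =>
      (gradient (fun u' => ψ u' x.2) x.1, -gradient (fun v' => ψ x.1 v') x.2) := fun u hu v hv =>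
  ⟨isSubgradientOn_of_convexOn (hconv v hv) hu
      (hψu u hu v hv).hasGradientAt.hasFDerivAt.hasFDerivWithinAt,
    isSubgradientOn_neg_of_concaveOn (hconc u hu) hv
      (hψv u hu v hv).hasGradientAt.hasFDerivAt.hasFDerivWithinAt⟩

theorem saddleSet_subset_variationalSet (hT : IsSaddleOperatorOn ψ U V T) :
    saddleSet ψ U V ⊆ variationalSet T (U ×ˢ V) := by
  rintro ⟨t, ⟨h, e⟩, ⟨u, v⟩⟩ ⟨hu, hv, r, s, hr, hs, hrs⟩
  refine ⟨⟨hu, hv⟩, fun ⟨w, ζ⟩ ⟨hw, hζ⟩ => ?_⟩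
  have hfst : ψ w ζ + ⟪(T (w, ζ)).1, u - w⟫ ≤ ψ u ζ := (hT w hw ζ hζ).1 u hu
  have hsnd : -ψ w ζ + ⟪(T (w, ζ)).2, v - ζ⟫ ≤ -ψ w v := (hT w hw ζ hζ).2 v hv
  have hrζ : ⟪e, ζ⟫ + ψ u ζ < r := real_inner_comm e ζ ▸ hr ζ hζ
  have hsw : ⟪h, w⟫ - ψ w v < s := real_inner_comm h w ▸ hs w hw
  dsimp only at hrs ⊢
  linarith

theorem mem_saddleSet_of_inner_lt (hT : IsSaddleOperatorOn ψ U V T) {x : E × F}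
    (hx : x ∈ U ×ˢ V) {t : ℝ} (ht : ⟪x.1, (T x).1⟫ + ⟪x.2, (T x).2⟫ < t) :
    (t, T x, x) ∈ saddleSet ψ U V := by
  obtain ⟨u, v⟩ := x
  obtain ⟨hu, hv⟩ := hx
  obtain ⟨hfst, hsnd⟩ := hT u hu v hv
  obtain ⟨a, hua, hat⟩ := exists_between (lt_sub_iff_add_lt.mpr ht)
  refine ⟨hu, hv, t - a + ψ u v, a - ψ u v, fun ζ hζ => ?_, fun ω hω => ?_, by simp⟩
  · have hmax : ⟪ζ, (T (u, v)).2⟫ - -ψ u ζ ≤ ⟪v, (T (u, v)).2⟫ - -ψ u v :=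
      hsnd.inner_sub_le_inner_sub hζ
    dsimp only at hat ⊢
    linarith
  · have hmax : ⟪ω, (T (u, v)).1⟫ - ψ ω v ≤ ⟪u, (T (u, v)).1⟫ - ψ u v :=
      hfst.inner_sub_le_inner_sub hω
    exact hmax.trans_lt (sub_lt_sub_right hua _)

theorem stmt_10_general (hT : IsSaddleOperatorOn ψ U V T) :
    saddleSet ψ U V ⊆ variationalSet T (U ×ˢ V) ∧
      ∀ x ∈ U ×ˢ V, ∀ t : ℝ, ⟪x.1, (T x).1⟫ + ⟪x.2, (T x).2⟫ < t →
        (t, T x, x) ∈ saddleSet ψ U V :=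
  ⟨saddleSet_subset_variationalSet hT, fun _ hx _ ht => mem_saddleSet_of_inner_lt hT hx ht⟩

end Saddle

theorem stmt_10 {p q : ℕ}
    (U : Set (EuclideanSpace ℝ (Fin p))) (V : Set (EuclideanSpace ℝ (Fin q)))
    (hUne : U.Nonempty) (hVne : V.Nonempty)
    (hUconv : Convex ℝ U) (hVconv : Convex ℝ V)
    (hUcomp : IsCompact U) (hVcomp : IsCompact V)
    (ψ : EuclideanSpace ℝ (Fin p) → EuclideanSpace ℝ (Fin q) → ℝ)
    (hsmooth : ContDiff ℝ 1
      (fun w : EuclideanSpace ℝ (Fin p) × EuclideanSpace ℝ (Fin q) => ψ w.1 w.2))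
    (hconv : ∀ v ∈ V, ConvexOn ℝ U (fun u => ψ u v))
    (hconc : ∀ u ∈ U, ConcaveOn ℝ V (fun v => ψ u v))
    (Z : Set (ℝ × (EuclideanSpace ℝ (Fin p) × EuclideanSpace ℝ (Fin q)) ×
      (EuclideanSpace ℝ (Fin p) × EuclideanSpace ℝ (Fin q))))
    (hZ : Z = {z | z.2.2.1 ∈ U ∧ z.2.2.2 ∈ V ∧ ∃ r s : ℝ,
      (∀ ζ ∈ V, ⟪ζ, z.2.1.2⟫ + ψ z.2.2.1 ζ < r) ∧
      (∀ ω ∈ U, ⟪ω, z.2.1.1⟫ - ψ ω z.2.2.2 < s) ∧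
      r + s ≤ z.1}) :
    -- (a) Z ⊆ 𝓕[F, U × V], where F(u,v) = (∇_u ψ(u,v), −∇_v ψ(u,v))
    (∀ z ∈ Z, (z.2.2.1 ∈ U ∧ z.2.2.2 ∈ V) ∧
      ∀ w ∈ U, ∀ ζ ∈ V,
        ⟪gradient (fun u' => ψ u' ζ) w, z.2.2.1 - w⟫ +
          ⟪-gradient (fun v' => ψ w v') ζ, z.2.2.2 - ζ⟫ ≤
          z.1 - (⟪z.2.1.1, w⟫ + ⟪z.2.1.2, ζ⟫)) ∧
    -- (b) x ∈ U × V, g = F(x), t > ⟨x, F(x)⟩ implies (t,g,x) ∈ Z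
    (∀ u ∈ U, ∀ v ∈ V, ∀ t : ℝ,
      ⟪u, gradient (fun u' => ψ u' v) u⟫ +
        ⟪v, -gradient (fun v' => ψ u v') v⟫ < t →
      (t, (gradient (fun u' => ψ u' v) u, -gradient (fun v' => ψ u v') v),
        (u, v)) ∈ Z) := by
  subst hZ
  have hψ := hsmooth.differentiable one_ne_zero
  obtain ⟨hsubset, hmem⟩ := stmt_10_general <| isSaddleOperatorOn_gradient hconv hconc
    (fun u _ v _ => (hψ.comp (differentiable_id.prodMk (differentiable_const v))) u)
    (fun u _ v _ => (hψ.comp ((differentiable_const u).prodMk differentiable_id)) v)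
  exact ⟨fun z hz => ⟨(hsubset hz).1, fun w hw ζ hζ => (hsubset hz).2 (w, ζ) ⟨hw, hζ⟩⟩,
    fun u hu v hv => hmem (u, v) ⟨hu, hv⟩⟩
end

section
/- For k = 1,…,K let X_k ⊆ ℝ^{n_k} be nonempty sets, F_k : X_k → ℝ^{n_k} be maps, and T_k ⊆ ℝ × ℝ^{n_k} × ℝ^{n_k} represent (F_k, X_k), i.e., T_k ⊆ 𝓕[F_k, X_k] and (⟨F_k(x), x⟩, F_k(x), x) ∈ T_k for all x ∈ X_k. Let X := X_1 × … × X_K ⊆ ℝ^{n_1} × … × ℝ^{n_K} and F(x_1,…,x_K) := (F_1(x_1), …, F_K(x_K)). Then the set T := {(t, (g_1,…,g_K), (x_1,…,x_K)) : there exist t_1,…,t_K with (t_k, g_k, x_k) ∈ T_k for all k and t = Σ_k t_k} represents (F, X): T ⊆ 𝓕[F, X] and (⟨F(x), x⟩, F(x), x) ∈ T for all x ∈ X. -/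
open scoped RealInnerProductSpace

section

variable {E : Type*} [NormedAddCommGroup E] [InnerProductSpace ℝ E]

/-- The set `𝓕[F, X]` of triples `(t, g, x)` with `x ∈ X` that satisfy
`⟪F y, x - y⟫ ≤ t - ⟪g, y⟫` for every `y ∈ X`. The map `F` is total; only its values on `X`
matter. -/
def admissibleTriples (F : E → E) (X : Set E) : Set (ℝ × E × E) :=
  {p | p.2.2 ∈ X ∧ ∀ y ∈ X, ⟪F y, p.2.2 - y⟫ ≤ p.1 - ⟪p.2.1, y⟫}

/-- The triple `(⟪F x, x⟫, F x, x)` that a representation of `F` must contain for each `x` in the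
domain. -/
def canonicalTriple (F : E → E) (x : E) : ℝ × E × E :=
  (⟪F x, x⟫, F x, x)

/-- The set `T` represents the vector field `F` on `X`: it lies between the canonical triples and
the admissible ones. -/
structure RepresentsField (T : Set (ℝ × E × E)) (F : E → E) (X : Set E) : Prop where
  subset_admissibleTriples : T ⊆ admissibleTriples F X
  mapsTo_canonicalTriple : Set.MapsTo (canonicalTriple F) X T

end

section

variable {ι : Type*} [Fintype ι] {E : ι → Type*}

/-- The direct sum of sets of triples: blocks `(t k, g k, x k) ∈ T k` are combined by adding the
scalars and stacking the vectors. The product space is `PiLp 2 E`, whose inner product is the sum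
of those of the factors. -/
def tripleSum (T : ∀ k, Set (ℝ × E k × E k)) : Set (ℝ × PiLp 2 E × PiLp 2 E) :=
  {p | ∃ t : ι → ℝ, (∀ k, (t k, p.2.1 k, p.2.2 k) ∈ T k) ∧ p.1 = ∑ k, t k}

theorem tripleSum_mono {S T : ∀ k, Set (ℝ × E k × E k)} (hST : ∀ k, S k ⊆ T k) :
    tripleSum S ⊆ tripleSum T :=
  fun _ ⟨t, ht, hsum⟩ ↦ ⟨t, fun k ↦ hST k (ht k), hsum⟩

/-- The product vector field `(x₁, …, x_K) ↦ (F₁ x₁, …, F_K x_K)`. -/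
def piField (F : ∀ k, E k → E k) (x : PiLp 2 E) : PiLp 2 E :=
  WithLp.toLp 2 fun k ↦ F k (x k)

variable [∀ k, NormedAddCommGroup (E k)] [∀ k, InnerProductSpace ℝ (E k)]
  {F : ∀ k, E k → E k}

theorem tripleSum_admissibleTriples_subset {X : ∀ k, Set (E k)} :
    tripleSum (fun k ↦ admissibleTriples (F k) (X k)) ⊆
      admissibleTriples (piField F) {x | ∀ k, x k ∈ X k} := by
  rintro ⟨_, g, x⟩ ⟨t, ht, rfl⟩
  refine ⟨fun k ↦ (ht k).1, fun y hy ↦ ?_⟩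
  calc
    ⟪piField F y, x - y⟫ = ∑ k, ⟪F k (y k), x k - y k⟫ := PiLp.inner_apply _ _
    _ ≤ ∑ k, (t k - ⟪g k, y k⟫) := Finset.sum_le_sum fun k _ ↦ (ht k).2 (y k) (hy k)
    _ = ∑ k, t k - ⟪g, y⟫ := by rw [Finset.sum_sub_distrib, PiLp.inner_apply]

theorem canonicalTriple_piField_mem_tripleSum {T : ∀ k, Set (ℝ × E k × E k)} {x : PiLp 2 E}
    (hx : ∀ k, canonicalTriple (F k) (x k) ∈ T k) :
    canonicalTriple (piField F) x ∈ tripleSum T :=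
  ⟨fun k ↦ ⟪F k (x k), x k⟫, hx, PiLp.inner_apply _ _⟩

end

theorem stmt_13_general {ι : Type*} [Fintype ι] {E : ι → Type*}
    [∀ k, NormedAddCommGroup (E k)] [∀ k, InnerProductSpace ℝ (E k)]
    {X : ∀ k, Set (E k)} {F : ∀ k, E k → E k} {T : ∀ k, Set (ℝ × E k × E k)}
    (hT : ∀ k, RepresentsField (T k) (F k) (X k)) :
    RepresentsField (tripleSum T) (piField F) {x | ∀ k, x k ∈ X k} where
  subset_admissibleTriples :=
    (tripleSum_mono fun k ↦ (hT k).subset_admissibleTriples).trans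
      tripleSum_admissibleTriples_subset
  mapsTo_canonicalTriple _ hx :=
    canonicalTriple_piField_mem_tripleSum fun k ↦ (hT k).mapsTo_canonicalTriple (hx k)

theorem stmt_13 {K : ℕ} (n : Fin K → ℕ)
    (X : ∀ k, Set (EuclideanSpace ℝ (Fin (n k))))
    (hne : ∀ k, (X k).Nonempty)
    (F : ∀ k, EuclideanSpace ℝ (Fin (n k)) → EuclideanSpace ℝ (Fin (n k)))
    (T : ∀ k, Set (ℝ × EuclideanSpace ℝ (Fin (n k)) × EuclideanSpace ℝ (Fin (n k))))
    -- each T_k is contained in 𝓕[F_k, X_k] ...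
    (hT1 : ∀ k, ∀ p ∈ T k, p.2.2 ∈ X k ∧
      ∀ y ∈ X k, ⟪F k y, p.2.2 - y⟫ ≤ p.1 - ⟪p.2.1, y⟫)
    -- ... and contains the canonical triples
    (hT2 : ∀ k, ∀ x ∈ X k, (⟪F k x, x⟫, F k x, x) ∈ T k)
    (Tprod : Set (ℝ × (∀ k, EuclideanSpace ℝ (Fin (n k))) ×
      (∀ k, EuclideanSpace ℝ (Fin (n k)))))
    (hTprod : Tprod = {p | ∃ ts : Fin K → ℝ,
      (∀ k, (ts k, p.2.1 k, p.2.2 k) ∈ T k) ∧ p.1 = ∑ k, ts k}) :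
    -- T ⊆ 𝓕[F, X] for the direct product data (inner product = sum of blockwise ones)
    (∀ p ∈ Tprod, (∀ k, p.2.2 k ∈ X k) ∧
      ∀ y : ∀ k, EuclideanSpace ℝ (Fin (n k)), (∀ k, y k ∈ X k) →
        ∑ k, ⟪F k (y k), p.2.2 k - y k⟫ ≤ p.1 - ∑ k, ⟪p.2.1 k, y k⟫) ∧
    -- and T contains the canonical triples of the product field
    (∀ x : ∀ k, EuclideanSpace ℝ (Fin (n k)), (∀ k, x k ∈ X k) →
      (∑ k, ⟪F k (x k), x k⟫, fun k => F k (x k), x) ∈ Tprod) := by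
  subst hTprod
  obtain ⟨hsub, hcan⟩ := stmt_13_general fun k ↦ ⟨hT1 k, hT2 k⟩
  -- Inner products on `PiLp 2` unfold to the blockwise sums of the goal.
  refine ⟨fun p hp ↦ ?_, fun x hx ↦ hcan (x := .toLp 2 x) hx⟩
  obtain ⟨hx, hle⟩ := @hsub (p.1, .toLp 2 p.2.1, .toLp 2 p.2.2) hp
  exact ⟨hx, fun y hy ↦ hle (.toLp 2 y) hy⟩
end

section
/- For all real numbers u ≥ 0 and v ≥ 0, −u/(u+v+1) equals the minimum of f·v + t over all (f, t, s) ∈ ℝ³ satisfying 0 ≤ f ≤ 1, 0 ≤ s, s² ≤ u·f, s + 1/(u+1) ≤ 1, t − f ≥ (1−s)² − 1, and t ≤ 1; in particular, the minimum is attained. -/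
/-!
Put `a = v + 1`. The constraint on `t` reduces the problem to minimizing `f * a + s ^ 2 - 2 * s`
subject to `s ^ 2 ≤ u * f`. Two AM-GM estimates,
`2 * (a / (u + a)) * s ≤ f * a + u * a / (u + a) ^ 2` and
`2 * (u / (u + a)) * s ≤ s ^ 2 + (u / (u + a)) ^ 2`, add up to the lower bound `-(u / (u + a))`.
Both are equalities at `s = u / (u + a)`, `f = u / (u + a) ^ 2`.
-/

theorem neg_div_add_eq_mul_add_sq_sub_two_mul {𝕜 : Type*} [Field 𝕜] {u a : 𝕜} (h : u + a ≠ 0) :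
    -(u / (u + a)) = u / (u + a) ^ 2 * a + ((u / (u + a)) ^ 2 - 2 * (u / (u + a))) := by
  field_simp
  ring

section OrderedField

variable {𝕜 : Type*} [Field 𝕜] [LinearOrder 𝕜] [IsStrictOrderedRing 𝕜] {a f s u : 𝕜}

theorem neg_div_add_le_mul_add_sq_sub_two_mul (hu : 0 ≤ u) (ha : 0 < a) (hf : 0 ≤ f)
    (hs : s ^ 2 ≤ u * f) : -(u / (u + a)) ≤ f * a + (s ^ 2 - 2 * s) := by
  have weighted_sq_le : (a / (u + a) * s) ^ 2 ≤ f * a * (u * a / (u + a) ^ 2) :=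
    calc (a / (u + a) * s) ^ 2 = (a / (u + a)) ^ 2 * s ^ 2 := by ring
      _ ≤ (a / (u + a)) ^ 2 * (u * f) := by gcongr
      _ = f * a * (u * a / (u + a) ^ 2) := by field_simp
  have linear_bound : 2 * (a / (u + a) * s) ≤ f * a + u * a / (u + a) ^ 2 :=
    two_mul_le_add_of_sq_le_mul (by positivity) (by positivity) weighted_sq_le
  have square_bound : 2 * s * (u / (u + a)) ≤ s ^ 2 + (u / (u + a)) ^ 2 :=
    two_mul_le_add_sq _ _
  have linear_terms : 2 * (a / (u + a) * s) + 2 * s * (u / (u + a)) = 2 * s := by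
    field_simp
    ring
  have constant_terms : u * a / (u + a) ^ 2 + (u / (u + a)) ^ 2 = u / (u + a) := by
    field_simp
    ring
  linarith

theorem div_add_sq_le_one (hu : 0 ≤ u) (ha : 1 ≤ a) : u / (u + a) ^ 2 ≤ 1 := by
  have one_le : 1 ≤ u + a := by linarith
  refine div_le_one_of_le₀ ?_ (by positivity)
  calc u ≤ u + a := by linarith
    _ ≤ (u + a) ^ 2 := le_self_pow₀ one_le two_ne_zero

theorem div_add_add_one_div_add_one_le_one (hu : 0 ≤ u) (ha : 1 ≤ a) :
    u / (u + a) + 1 / (u + 1) ≤ 1 :=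
  calc u / (u + a) + 1 / (u + 1) ≤ u / (u + 1) + 1 / (u + 1) := by gcongr
    _ = 1 := by rw [← add_div, div_self (by positivity)]

end OrderedField

theorem stmt_16 (u v : ℝ) (hu : 0 ≤ u) (hv : 0 ≤ v) :
    IsLeast {z : ℝ | ∃ f t s : ℝ, z = f * v + t ∧
      0 ≤ f ∧ f ≤ 1 ∧ 0 ≤ s ∧ s ^ 2 ≤ u * f ∧ s + 1 / (u + 1) ≤ 1 ∧
      (1 - s) ^ 2 - 1 ≤ t - f ∧ t ≤ 1}
      (-(u / (u + v + 1))) := by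
  have one_le : 1 ≤ v + 1 := by linarith
  rw [add_assoc]
  constructor
  · set f := u / (u + (v + 1)) ^ 2 with hf
    set s := u / (u + (v + 1)) with hs
    have value_eq : -s = f * (v + 1) + (s ^ 2 - 2 * s) :=
      neg_div_add_eq_mul_add_sq_sub_two_mul (by positivity)
    have f_nonneg : 0 ≤ f := by positivity
    have s_nonneg : 0 ≤ s := by positivity
    have sq_eq : s ^ 2 = u * f := by rw [hs, hf, div_pow, sq u, mul_div_assoc]
    have t_le_one : f + (s ^ 2 - 2 * s) ≤ 1 := by linarith [mul_nonneg f_nonneg hv]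
    exact ⟨f, f + (s ^ 2 - 2 * s), s, by linarith, f_nonneg, div_add_sq_le_one hu one_le,
      s_nonneg, sq_eq.le, div_add_add_one_div_add_one_le_one hu one_le, by linarith, t_le_one⟩
  · rintro _ ⟨f, t, s, rfl, f_nonneg, -, -, sq_le, -, t_ge, -⟩
    have reduced_bound : -(u / (u + (v + 1))) ≤ f * (v + 1) + (s ^ 2 - 2 * s) :=
      neg_div_add_le_mul_add_sq_sub_two_mul hu (by positivity) f_nonneg sq_le
    linarith
end

section
/- For all real numbers u ≥ 0 and v ≥ 0, u/(u+v+1) equals the minimum of f·u + t over all (f, t, s) ∈ ℝ³ satisfying 0 ≤ f ≤ 1, 0 ≤ s ≤ 1, s² ≤ (v+1)·f, and (1−s)² ≤ t ≤ 1; in particular, the minimum is attained. -/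
/-!
For fixed `s` the cheapest feasible choice is `f = s² / (v + 1)`, `t = (1 - s)²`, which leaves the
convex quadratic `a * s² + (1 - s)²` with `a = u / (v + 1)`. Completing the square, its minimum is
`a / (a + 1) = u / (u + v + 1)`, attained at `s = 1 / (a + 1) ∈ [0, 1]`. At that point the bound
`f ≤ 1` holds because `s ≤ 1 ≤ v + 1`.
-/

section Field

variable {K : Type*} [Field K] {a b : K}

theorem mul_sq_add_mul_one_sub_sq (hab : a + b ≠ 0) (s : K) :
    a * s ^ 2 + b * (1 - s) ^ 2 = a * b / (a + b) + (a + b) * (s - b / (a + b)) ^ 2 := by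
  field_simp
  ring

end Field

section OrderedField

variable {K : Type*} [Field K] [LinearOrder K] [IsStrictOrderedRing K]

theorem isLeast_image_Icc_mul_sq_add_mul_one_sub_sq {a b : K} (ha : 0 ≤ a) (hb : 0 ≤ b)
    (hab : 0 < a + b) :
    IsLeast ((fun s ↦ a * s ^ 2 + b * (1 - s) ^ 2) '' Set.Icc 0 1) (a * b / (a + b)) := by
  simp only [mul_sq_add_mul_one_sub_sq hab.ne']
  constructor
  · have hmem : b / (a + b) ∈ Set.Icc 0 1 :=
      ⟨div_nonneg hb hab.le, div_le_one_of_le₀ (le_add_of_nonneg_left ha) hab.le⟩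
    exact ⟨b / (a + b), hmem, by simp⟩
  · rintro _ ⟨s, -, rfl⟩
    exact le_add_of_nonneg_right (mul_nonneg hab.le (sq_nonneg _))

theorem isLeast_image_Icc_div_mul_sq_add_one_sub_sq {u w : K} (hu : 0 ≤ u) (hw : 0 < w) :
    IsLeast ((fun s ↦ u / w * s ^ 2 + (1 - s) ^ 2) '' Set.Icc 0 1) (u / (u + w)) := by
  have hvalue : u / w * 1 / (u / w + 1) = u / (u + w) := by field_simp
  simpa only [hvalue, one_mul] using
    isLeast_image_Icc_mul_sq_add_mul_one_sub_sq (div_nonneg hu hw.le) zero_le_one (by positivity)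

theorem stmt_17_general {u v : K} (hu : 0 ≤ u) (hv : 0 ≤ v) :
    IsLeast {z : K | ∃ f t s : K, z = f * u + t ∧
      0 ≤ f ∧ f ≤ 1 ∧ 0 ≤ s ∧ s ≤ 1 ∧ s ^ 2 ≤ (v + 1) * f ∧
      (1 - s) ^ 2 ≤ t ∧ t ≤ 1}
      (u / (u + v + 1)) := by
  have hw : 0 < v + 1 := by positivity
  rw [add_assoc]
  obtain ⟨⟨s, ⟨hs0, hs1⟩, hs⟩, hmin⟩ := isLeast_image_Icc_div_mul_sq_add_one_sub_sq hu hw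
  constructor
  · have hf : s ^ 2 / (v + 1) ≤ 1 :=
      div_le_one_of_le₀ ((pow_le_one₀ hs0 hs1).trans (le_add_of_nonneg_left hv)) hw.le
    have ht : (1 - s) ^ 2 ≤ 1 := pow_le_one₀ (sub_nonneg.2 hs1) (sub_le_self 1 hs0)
    exact ⟨s ^ 2 / (v + 1), (1 - s) ^ 2, s, by rw [← hs]; ring, by positivity, hf, hs0, hs1,
      (mul_div_cancel₀ _ hw.ne').ge, le_rfl, ht⟩
  · rintro _ ⟨f, t, s, rfl, -, -, hs0, hs1, hsf, hst, -⟩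
    calc u / (u + (v + 1)) ≤ u / (v + 1) * s ^ 2 + (1 - s) ^ 2 := hmin ⟨s, ⟨hs0, hs1⟩, rfl⟩
      _ = s ^ 2 / (v + 1) * u + (1 - s) ^ 2 := by ring
      _ ≤ f * u + t := by
        gcongr
        exact (div_le_iff₀' hw).2 hsf

end OrderedField

theorem stmt_17 (u v : ℝ) (hu : 0 ≤ u) (hv : 0 ≤ v) :
    IsLeast {z : ℝ | ∃ f t s : ℝ, z = f * u + t ∧
      0 ≤ f ∧ f ≤ 1 ∧ 0 ≤ s ∧ s ≤ 1 ∧ s ^ 2 ≤ (v + 1) * f ∧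
      (1 - s) ^ 2 ≤ t ∧ t ≤ 1}
      (u / (u + v + 1)) :=
  stmt_17_general hu hv
end

section
/- Let m, n ≥ 1, x ∈ ℝ^{m×n} be a real m×n matrix, and y ∈ ℝ^{m×m} be a symmetric positive semidefinite matrix. Then 2·√(Tr(xᵀ y x)) = inf { Tr(y f) + s : f ∈ ℝ^{m×m} symmetric, s ∈ ℝ, and the (m+n)×(m+n) block matrix [[f, x], [xᵀ, s·Iₙ]] is positive semidefinite }. -/
open Matrix

/-!
For `s > 0`, the Schur complement criterion says that the block matrix is positive semidefinite iff
`s⁻¹ x xᴴ ≤ f`. Pairing with `y ≥ 0` is monotone, so the least value of `Tr (y f) + s` at fixed `s`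
is `a / s + s`, where `a = Tr (xᴴ y x)`, and AM-GM gives `inf_{s > 0} (a / s + s) = 2 √a`. This
infimum need not be attained (take `a = 0`), and the boundary case `s = 0` is reached by perturbing
`s` to `s + ε`.
-/

theorem two_mul_sqrt_le_div_add_self {a s : ℝ} (ha : 0 ≤ a) (hs : 0 < s) :
    2 * √a ≤ a / s + s :=
  calc
    2 * √a = 2 * √a * s / s := by field_simp
    _ ≤ (√a ^ 2 + s ^ 2) / s := by gcongr; exact two_mul_le_add_sq _ _
    _ = a / s + s := by rw [Real.sq_sqrt ha]; field_simp

theorem isGLB_image_div_add_self {a : ℝ} (ha : 0 ≤ a) :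
    IsGLB ((fun s ↦ a / s + s) '' Set.Ioi 0) (2 * √a) := by
  refine ⟨Set.forall_mem_image.2 fun s hs ↦ two_mul_sqrt_le_div_add_self ha hs, fun b hb ↦ ?_⟩
  refine le_of_forall_pos_le_add fun ε hε ↦ ?_
  have sqrt_add_pos : 0 < √a + ε := by positivity
  have div_le_sqrt : a / (√a + ε) ≤ √a := by
    rw [div_le_iff₀ sqrt_add_pos]
    nlinarith [Real.mul_self_sqrt ha, mul_nonneg (Real.sqrt_nonneg a) hε.le]
  have le_value := hb (Set.mem_image_of_mem _ sqrt_add_pos)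
  linarith

section RCLike

open scoped ComplexOrder

variable {𝕜 m n : Type*} [RCLike 𝕜]

open scoped MatrixOrder Matrix.Norms.L2Operator in
theorem trace_mul_nonneg_of_posSemidef [Fintype m] {a b : Matrix m m 𝕜}
    (ha : a.PosSemidef) (hb : b.PosSemidef) : 0 ≤ (a * b).trace := by
  classical
  obtain ⟨c, rfl⟩ := CStarAlgebra.nonneg_iff_eq_star_mul_self.mp ha.nonneg
  rw [star_eq_conjTranspose, Matrix.mul_assoc, trace_mul_comm]
  exact (hb.mul_mul_conjTranspose_same c).trace_nonneg

theorem re_trace_mul_inv_smul_mul_conjTranspose [Fintype m] [Fintype n]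
    (x : Matrix m n 𝕜) (y : Matrix m m 𝕜) (s : ℝ) :
    RCLike.re (y * (s⁻¹ • (x * xᴴ))).trace = RCLike.re (xᴴ * y * x).trace / s := by
  rw [Matrix.mul_smul, trace_smul, RCLike.smul_re, ← Matrix.mul_assoc, trace_mul_comm,
    ← Matrix.mul_assoc, inv_mul_eq_div]

variable [DecidableEq n] {f : Matrix m m 𝕜} {x : Matrix m n 𝕜} {s t : ℝ}

theorem posSemidef_fromBlocks_smul_one_iff [Finite m] [Fintype n] (hs : 0 < s) :
    (fromBlocks f x xᴴ (s • (1 : Matrix n n 𝕜))).PosSemidef ↔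
      (f - s⁻¹ • (x * xᴴ)).PosSemidef := by
  have posDef_smul_one : (s • (1 : Matrix n n 𝕜)).PosDef := PosDef.one.smul hs
  have inv_smul_one : (s • (1 : Matrix n n 𝕜))⁻¹ = s⁻¹ • 1 :=
    inv_eq_right_inv (by simp [smul_smul, hs.ne'])
  let := posDef_smul_one.isUnit.invertible
  rw [PosDef.fromBlocks₂₂ f x posDef_smul_one, inv_smul_one]
  simp only [Matrix.mul_smul, Matrix.smul_mul, Matrix.mul_one]

theorem posSemidef_fromBlocks_smul_one_mono (hst : s ≤ t)
    (h : (fromBlocks f x xᴴ (s • (1 : Matrix n n 𝕜))).PosSemidef) :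
    (fromBlocks f x xᴴ (t • (1 : Matrix n n 𝕜))).PosSemidef := by
  classical
  have increment :
      (fromBlocks (0 : Matrix m m 𝕜) 0 0 ((t - s) • (1 : Matrix n n 𝕜))).PosSemidef := by
    rw [← diagonal_one, ← diagonal_smul, ← diagonal_zero, fromBlocks_diagonal]
    exact .diagonal (by rintro (_ | _) <;> simp [RCLike.real_smul_eq_coe_mul, hst])
  simpa [fromBlocks_add, ← add_smul] using h.add increment

theorem nonneg_of_posSemidef_fromBlocks_smul_one [Nonempty n]
    (h : (fromBlocks f x xᴴ (s • (1 : Matrix n n 𝕜))).PosSemidef) : 0 ≤ s := by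
  obtain ⟨i⟩ := ‹Nonempty n›
  simpa [RCLike.real_smul_eq_coe_mul] using h.diag_nonneg (i := Sum.inr i)

theorem re_trace_div_le_of_posSemidef_fromBlocks [Fintype m] [Fintype n]
    {y : Matrix m m 𝕜} (hy : y.PosSemidef) (hs : 0 < s)
    (h : (fromBlocks f x xᴴ (s • (1 : Matrix n n 𝕜))).PosSemidef) :
    RCLike.re (xᴴ * y * x).trace / s ≤ RCLike.re (y * f).trace := by
  have trace_schur_nonneg :=
    trace_mul_nonneg_of_posSemidef hy ((posSemidef_fromBlocks_smul_one_iff hs).1 h)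
  rw [Matrix.mul_sub, trace_sub, sub_nonneg] at trace_schur_nonneg
  simpa only [re_trace_mul_inv_smul_mul_conjTranspose] using RCLike.re_le_re trace_schur_nonneg

theorem stmt_19_general [Fintype m] [Fintype n] [Nonempty n]
    (x : Matrix m n 𝕜) {y : Matrix m m 𝕜} (hy : y.PosSemidef) :
    IsGLB {z : ℝ | ∃ (f : Matrix m m 𝕜) (s : ℝ), f.IsHermitian ∧
        z = RCLike.re (y * f).trace + s ∧
        (fromBlocks f x xᴴ (s • (1 : Matrix n n 𝕜))).PosSemidef}
      (2 * √(RCLike.re (xᴴ * y * x).trace)) := by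
  have ha : 0 ≤ RCLike.re (xᴴ * y * x).trace :=
    (RCLike.nonneg_iff.1 (hy.conjTranspose_mul_mul_same x).trace_nonneg).1
  refine ⟨?_, fun b hb ↦ (isGLB_image_div_add_self ha).2 (lowerBounds_mono_set ?_ hb)⟩
  · rintro _ ⟨f, s, -, rfl, h⟩
    refine le_of_forall_pos_le_add fun ε hε ↦ ?_
    have hsε : 0 < s + ε := add_pos_of_nonneg_of_pos (nonneg_of_posSemidef_fromBlocks_smul_one h) hε
    have trace_div_le := re_trace_div_le_of_posSemidef_fromBlocks hy hsε
      (posSemidef_fromBlocks_smul_one_mono (le_add_of_nonneg_right hε.le) h)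
    linarith [two_mul_sqrt_le_div_add_self ha hsε]
  · rintro _ ⟨s, hs, rfl⟩
    refine ⟨s⁻¹ • (x * xᴴ), s, ?_, ?_, ?_⟩
    · exact IsSelfAdjoint.smul (.all _) (isHermitian_mul_conjTranspose_self x)
    · rw [re_trace_mul_inv_smul_mul_conjTranspose]
    · rw [posSemidef_fromBlocks_smul_one_iff hs, sub_self]
      exact .zero

end RCLike

theorem stmt_19 {m n : ℕ} (hm : 1 ≤ m) (hn : 1 ≤ n)
    (x : Matrix (Fin m) (Fin n) ℝ) (y : Matrix (Fin m) (Fin m) ℝ)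
    (hy : y.PosSemidef) :
    2 * Real.sqrt ((xᵀ * y * x).trace) =
      sInf {z : ℝ | ∃ (f : Matrix (Fin m) (Fin m) ℝ) (s : ℝ), f.IsSymm ∧
        z = (y * f).trace + s ∧
        (Matrix.fromBlocks f x xᵀ (s • (1 : Matrix (Fin n) (Fin n) ℝ))).PosSemidef} := by
  have : Nonempty (Fin n) := ⟨⟨0, hn⟩⟩
  have glb := stmt_19_general x hy
  simpa using (glb.csInf_eq glb.nonempty).symm
end
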